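/- An alternating 3-form φ on 𝔤 = sp(2,ℝ) satisfies (i) φ(x,·,·) = 0 whenever x ∈ span(e₈,e₉,e₁₀), and (ii) φ([z,x],y,w) + φ(x,[z,y],w) + φ(x,y,[z,w]) = 0 for all z ∈ span(e₈,e₉,e₁₀) and all x,y,w ∈ 𝔤, if and only if there exist real constants a, b, f, h, p, q, r, s, t, u such that φ = f e¹²⁵ + a(e²³⁵ − e¹²⁷) + p e¹⁴⁵ + q(e¹⁴⁷ + e³⁴⁵) + s e¹⁵⁶ + t(e³⁵⁶ − e¹⁶⁷) + h e²³⁷ + b e²⁴⁶ + r e³⁴⁷ + u e³⁶⁷. In particular, the space of such 3-forms is 10-dimensional. -/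

import Mathlib

/-!
STATEMENT 10 (Proposition 2 of the paper): an alternating 3-form φ on 𝔤 = sp(2,ℝ)
annihilates span(e₈,e₉,e₁₀) and is infinitesimally invariant along it iff it is of the
form φ = f e¹²⁵ + a(e²³⁵ − e¹²⁷) + p e¹⁴⁵ + q(e¹⁴⁷ + e³⁴⁵) + s e¹⁵⁶ + t(e³⁵⁶ − e¹⁶⁷)
+ h e²³⁷ + b e²⁴⁶ + r e³⁴⁷ + u e³⁶⁷; the space of such 3-forms is 10-dimensional.
Here e₁=E₂, e₂=E₃, e₃=E₄, e₄=E₆, e₅=E₇, e₆=E₈, e₇=E₉, e₈=E₁, e₉=E₅, e₁₀=E₁₀ (0-based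
`eSp i` = e_{i+1}), `ε` is the dual basis (e^I), and e^{μνρ} = e^μ∧e^ν∧e^ρ is the wedge
(shuffle-sum convention), so that e^{μνρ}(X,Y,Z) is the 3×3 determinant `trip` below.
-/

noncomputable section
open Matrix
attribute [local instance 100] LieRing.ofAssociativeRing

/-- The matrix `J` defining `sp(2,ℝ)`. -/
def Jm : Matrix (Fin 4) (Fin 4) ℝ :=
  !![0, 0, 0, 1;
     0, 0, 1, 0;
     0, -1, 0, 0;
     -1, 0, 0, 0]

/-- The general element `E(a₁,…,a₁₀)` of `sp(2,ℝ)` (indices shifted: `a i` is `a_{i+1}`). -/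
def Emat (a : Fin 10 → ℝ) : Matrix (Fin 4) (Fin 4) ℝ :=
  !![a 4, a 6, a 8, 2 * a 9;
     -(a 3), a 5, a 7, a 8;
     a 1, a 2, -(a 5), -(a 6);
     -(2 * a 0), a 1, a 3, -(a 4)]

/-- The basis `E_{i+1} = E(0,…,1,…,0)` of `sp(2,ℝ)`. -/
def E (i : Fin 10) : Matrix (Fin 4) (Fin 4) ℝ := Emat (Pi.single i 1)

set_option maxHeartbeats 1000000 in
lemma Emat_rel (a : Fin 10 → ℝ) : (Emat a)ᵀ * Jm + Jm * Emat a = 0 := by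
  rw [Emat, Jm]
  ext i j
  fin_cases i <;> fin_cases j <;>
    simp [Matrix.mul_apply, Fin.sum_univ_four, Matrix.transpose_apply,
      Matrix.vecHead, Matrix.vecTail]

/-- `sp(2,ℝ)` as a Lie subalgebra of `gl(4,ℝ)` (with the commutator bracket). -/
def sp2 : LieSubalgebra ℝ (Matrix (Fin 4) (Fin 4) ℝ) where
  carrier := {X | Xᵀ * Jm + Jm * X = 0}
  zero_mem' := by simp
  add_mem' := by
    intro x y hx hy
    simp only [Set.mem_setOf_eq] at *
    rw [transpose_add, add_mul, mul_add]
    calc xᵀ * Jm + yᵀ * Jm + (Jm * x + Jm * y)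
        = (xᵀ * Jm + Jm * x) + (yᵀ * Jm + Jm * y) := by abel
      _ = 0 := by rw [hx, hy, add_zero]
  smul_mem' := by
    intro c x hx
    simp only [Set.mem_setOf_eq] at *
    rw [transpose_smul, smul_mul_assoc, mul_smul_comm, ← smul_add, hx, smul_zero]
  lie_mem' := by
    intro x y hx hy
    simp only [Set.mem_setOf_eq] at *
    have hx' : xᵀ * Jm = -(Jm * x) := eq_neg_of_add_eq_zero_left hx
    have hy' : yᵀ * Jm = -(Jm * y) := eq_neg_of_add_eq_zero_left hy
    have h1 : yᵀ * xᵀ * Jm = Jm * (y * x) := by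
      rw [mul_assoc, hx', mul_neg, ← mul_assoc, hy', neg_mul, neg_neg, mul_assoc]
    have h2 : xᵀ * yᵀ * Jm = Jm * (x * y) := by
      rw [mul_assoc, hy', mul_neg, ← mul_assoc, hx', neg_mul, neg_neg, mul_assoc]
    rw [Ring.lie_def, transpose_sub, transpose_mul, transpose_mul, sub_mul, mul_sub, h1, h2]
    abel

lemma E_mem (i : Fin 10) : E i ∈ sp2 := Emat_rel _

/-- The basis vectors `E_I` as elements of `sp(2,ℝ)`. -/
def Esp (i : Fin 10) : sp2 := ⟨E i, E_mem i⟩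

/-- The basis (e_I) (0-based) of sp(2,ℝ). -/
def eSp : Fin 10 → sp2 :=
  ![Esp 1, Esp 2, Esp 3, Esp 5, Esp 6, Esp 7, Esp 8, Esp 0, Esp 4, Esp 9]

/-- The wedge of three 1-forms (shuffle-sum convention), evaluated on a triple:
(α∧β∧γ)(X,Y,Z) = det of the matrix of evaluations. -/
def trip (α β γ : sp2 →ₗ[ℝ] ℝ) (X Y Z : sp2) : ℝ :=
  α X * (β Y * γ Z - β Z * γ Y) - α Y * (β X * γ Z - β Z * γ X)
    + α Z * (β X * γ Y - β Y * γ X)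

/-- span(e₈,e₉,e₁₀) = span(E₁,E₅,E₁₀), i.e. sl(2,ℝ)_l, inside the matrices. -/
def spanL : Submodule ℝ (Matrix (Fin 4) (Fin 4) ℝ) := Submodule.span ℝ {E 0, E 4, E 9}

/-!
Write `𝔩 = span(e₈, e₉, e₁₀) ≅ sl(2,ℝ)`. As an `𝔩`-module, `𝔤 / 𝔩` is the sum of two copies
`⟨e₁, e₅⟩`, `⟨e₃, e₇⟩` of the standard representation and of three trivial lines `⟨e₂⟩`, `⟨e₄⟩`,
`⟨e₆⟩`. The element `e₉` acts diagonally, so an invariant form vanishes on every triple of basis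
vectors whose weights do not add up to `0`. This leaves thirteen increasing triples, and invariance
under the lowering operator `e₈` ties six of them together in three pairs. Hence a form is
determined by ten of its coefficients, and the ten forms of the theorem are invariant and dual to
them.
-/

section AlternatingForms

variable {R M N ι : Type*} [CommRing R] [AddCommGroup M] [Module R M] [AddCommGroup N] [Module R N]

lemma alternatingMap_ext_of_strictMono {n : ℕ} [LinearOrder ι] (b : Module.Basis ι R M)
    {φ ψ : M [⋀^Fin n]→ₗ[R] N}
    (h : ∀ v : Fin n → ι, StrictMono v → φ (b ∘ v) = ψ (b ∘ v)) : φ = ψ := by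
  refine b.ext_alternating fun v hv => ?_
  have hsorted : StrictMono (v ∘ Tuple.sort v) :=
    (Tuple.monotone_sort v).strictMono_of_injective (hv.comp (Tuple.sort v).injective)
  have hperm := h _ hsorted
  rw [← Function.comp_assoc, φ.map_perm, ψ.map_perm] at hperm
  exact smul_left_cancel _ hperm

lemma alternatingMap_ext_three {φ ψ : M [⋀^Fin 3]→ₗ[R] N}
    (h : ∀ x y z, φ ![x, y, z] = ψ ![x, y, z]) : φ = ψ :=
  AlternatingMap.ext fun v => FinVec.etaExpand_eq v ▸ h (v 0) (v 1) (v 2)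

lemma alternatingMap_rotate_three (φ : M [⋀^Fin 3]→ₗ[R] N) (x y z : M) :
    φ ![x, y, z] = φ ![y, z, x] := by
  have hperm := φ.map_perm ![x, y, z] (finRotate 3)
  have hvec : ![x, y, z] ∘ finRotate 3 = ![y, z, x] := by ext i; fin_cases i <;> rfl
  rw [hvec, sign_finRotate] at hperm
  simpa using hperm.symm

lemma alternatingMap_reverse_three (φ : M [⋀^Fin 3]→ₗ[R] N) (x y z : M) :
    φ ![x, y, z] = -φ ![z, y, x] := by
  have hswap := φ.map_swap ![z, y, x] (i := 0) (j := 2) (by decide)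
  have hvec : ![z, y, x] ∘ Equiv.swap 0 2 = ![x, y, z] := by ext i; fin_cases i <;> rfl
  rwa [hvec] at hswap

/-- The wedge product of a finite family of linear forms, in the shuffle-sum convention. -/
def wedge [Fintype ι] [DecidableEq ι] (α : ι → Module.Dual R M) : M [⋀^ι]→ₗ[R] R :=
  Matrix.detRowAlternating.compLinearMap (LinearMap.pi α)

lemma wedge_apply [Fintype ι] [DecidableEq ι] (α : ι → Module.Dual R M) (v : ι → M) :
    wedge α v = (Matrix.of fun i j => α j (v i)).det :=
  rfl

end AlternatingForms

section BasicForms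

variable {R L N ι : Type*} [CommRing R] [LieRing L] [LieAlgebra R L] [AddCommGroup N] [Module R N]

/-- The alternating forms on a Lie algebra that are basic relative to a subspace `K`: they vanish
as soon as one argument lies in `K`, and their Lie derivative along each element of `K` vanishes.
For `K` the Lie algebra of a connected closed subgroup `H` of `G`, these are the left-invariant
forms on `G` that descend to `G / H`. -/
def basicForms (K : Submodule R L) (N ι : Type*) [AddCommGroup N] [Module R N] [Fintype ι]
    [DecidableEq ι] : Submodule R (L [⋀^ι]→ₗ[R] N) where
  carrier := {φ | (∀ v i, v i ∈ K → φ v = 0) ∧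
    ∀ z ∈ K, ∀ v, ∑ i, φ (Function.update v i ⁅z, v i⁆) = 0}
  zero_mem' := by simp
  add_mem' := by
    rintro φ ψ ⟨hφ, hφ'⟩ ⟨hψ, hψ'⟩
    refine ⟨fun v i hv => ?_, fun z hz v => ?_⟩
    · rw [AlternatingMap.add_apply, hφ v i hv, hψ v i hv, add_zero]
    · simp only [AlternatingMap.add_apply, Finset.sum_add_distrib, hφ' z hz v, hψ' z hz v, add_zero]
  smul_mem' := by
    rintro c φ ⟨hφ, hφ'⟩
    refine ⟨fun v i hv => ?_, fun z hz v => ?_⟩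
    · rw [AlternatingMap.smul_apply, hφ v i hv, smul_zero]
    · simp only [AlternatingMap.smul_apply, ← Finset.smul_sum, hφ' z hz v, smul_zero]

variable {K : Submodule R L}

lemma mem_basicForms_three_iff {φ : L [⋀^Fin 3]→ₗ[R] N} :
    φ ∈ basicForms K N (Fin 3) ↔
      (∀ x y z, x ∈ K → φ ![x, y, z] = 0) ∧
      ∀ z x y w, z ∈ K → φ ![⁅z, x⁆, y, w] + φ ![x, ⁅z, y⁆, w] + φ ![x, y, ⁅z, w⁆] = 0 := by
  have update_vec (x y w u : L) : Function.update ![x, y, w] 0 u = ![u, y, w] ∧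
      Function.update ![x, y, w] 1 u = ![x, u, w] ∧
      Function.update ![x, y, w] 2 u = ![x, y, u] := by
    refine ⟨?_, ?_, ?_⟩ <;> ext i <;> fin_cases i <;> rfl
  have sum_update (z x y w : L) :
      ∑ i, φ (Function.update ![x, y, w] i ⁅z, ![x, y, w] i⁆) =
        φ ![⁅z, x⁆, y, w] + φ ![x, ⁅z, y⁆, w] + φ ![x, y, ⁅z, w⁆] := by
    simp only [Fin.sum_univ_three, update_vec]
    rfl
  constructor
  · rintro ⟨hhor, hinv⟩
    exact ⟨fun x y z hx => hhor _ 0 hx, fun z x y w hz => sum_update z x y w ▸ hinv z hz _⟩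
  · rintro ⟨hhor, hinv⟩
    refine ⟨fun v i hv => ?_, fun z hz v => ?_⟩
    · rw [← FinVec.etaExpand_eq v]
      change φ ![v 0, v 1, v 2] = 0
      fin_cases i
      · exact hhor _ _ _ hv
      · rw [alternatingMap_rotate_three]
        exact hhor _ _ _ hv
      · rw [← alternatingMap_rotate_three]
        exact hhor _ _ _ hv
    · rw [← FinVec.etaExpand_eq v]
      exact (sum_update z (v 0) (v 1) (v 2)).trans (hinv _ _ _ _ hz)

lemma sum_weights_smul_apply_eq_zero [Fintype ι] [DecidableEq ι] {φ : L [⋀^ι]→ₗ[R] N}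
    (hφ : φ ∈ basicForms K N ι) {z : L} (hz : z ∈ K) {v : ι → L} {w : ι → R}
    (hw : ∀ i, ⁅z, v i⁆ = w i • v i) : (∑ i, w i) • φ v = 0 := by
  simpa only [hw, φ.map_update_smul, Function.update_eq_self, ← Finset.sum_smul] using hφ.2 z hz v

lemma smul_apply_add_apply_eq_zero {φ : L [⋀^Fin 3]→ₗ[R] N} (hφ : φ ∈ basicForms K N (Fin 3))
    {z : L} (hz : z ∈ K) {c : R} {x y n x' y' : L} (hx : ⁅z, x⁆ = c • x') (hn : ⁅z, n⁆ = 0)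
    (hy : ⁅z, y⁆ = c • y') : c • (φ ![x', n, y] + φ ![x, n, y']) = 0 := by
  have hsum := (mem_basicForms_three_iff.mp hφ).2 z x n y hz
  have hfst : φ ![c • x', n, y] = c • φ ![x', n, y] := φ.toMultilinearMap.cons_smul ![n, y] c x'
  have hsnd : φ ![x, 0, y] = 0 := φ.map_coord_zero 1 rfl
  have htrd : φ ![x, n, c • y'] = c • φ ![x, n, y'] := by
    rw [alternatingMap_reverse_three φ x n y', alternatingMap_reverse_three φ, smul_neg]
    exact congrArg Neg.neg (φ.toMultilinearMap.cons_smul ![n, x] c y')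
  rwa [hx, hn, hy, hfst, hsnd, htrd, add_zero, ← smul_add] at hsum

end BasicForms

section Coordinates

/-- The matrix entry `X i j` as a linear form on `sp(2,ℝ)`. -/
def entry (i j : Fin 4) : Module.Dual ℝ sp2 :=
  Matrix.entryLinearMap ℝ ℝ i j ∘ₗ sp2.toSubmodule.subtype

/-- The dual basis `(e^I)` of `eSp`, in terms of matrix entries. -/
def coord : Fin 10 → Module.Dual ℝ sp2 :=
  ![entry 2 0, entry 2 1, entry 3 2, entry 1 1, entry 0 1, entry 1 2, entry 0 2,
    -(1 / 2 : ℝ) • entry 3 0, entry 0 0, (1 / 2 : ℝ) • entry 0 3]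

lemma entry_apply (i j : Fin 4) (X : sp2) : entry i j X = X.1 i j := rfl

lemma coe_eq_Emat_coord (X : sp2) :
    (X : Matrix (Fin 4) (Fin 4) ℝ) = Emat ![coord 7 X, coord 0 X, coord 1 X, coord 2 X, coord 8 X,
      coord 3 X, coord 4 X, coord 5 X, coord 6 X, coord 9 X] := by
  have hrel (i j : Fin 4) : (X.1ᵀ * Jm + Jm * X.1) i j = 0 := congrFun₂ X.2 i j
  simp only [Matrix.add_apply, Matrix.mul_apply, Fin.sum_univ_four, Matrix.transpose_apply] at hrel
  have h01 := hrel 0 1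
  have h02 := hrel 0 2
  have h03 := hrel 0 3
  have h12 := hrel 1 2
  have h13 := hrel 1 3
  have h23 := hrel 2 3
  simp only [Fin.isValue, Jm, of_apply, cons_val', cons_val_one, cons_val_zero, cons_val_fin_one,
    mul_zero, add_zero, cons_val, mul_neg, mul_one, zero_add, zero_mul, one_mul, neg_mul]
    at h01 h02 h03 h12 h13 h23
  ext i j
  fin_cases i <;> fin_cases j <;> simp [Emat, coord, entry_apply] <;> linarith

/-- The renumbering of the basis: `e_I = E_{eIndex I}`, with both indices counted from `0`. -/
def eIndex : Fin 10 → Fin 10 := ![1, 2, 3, 5, 6, 7, 8, 0, 4, 9]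

lemma eIndex_injective : Function.Injective eIndex := by decide

lemma eSp_eq_Esp_eIndex (i : Fin 10) : eSp i = Esp (eIndex i) := by fin_cases i <;> rfl

lemma coord_of_coe_eq_Emat {X : sp2} {a : Fin 10 → ℝ}
    (hX : (X : Matrix (Fin 4) (Fin 4) ℝ) = Emat a) (i : Fin 10) : coord i X = a (eIndex i) := by
  fin_cases i <;> simp [coord, entry_apply, hX, Emat, eIndex]

lemma coord_eSp (i j : Fin 10) : coord i (eSp j) = if i = j then 1 else 0 := by
  rw [eSp_eq_Esp_eIndex, coord_of_coe_eq_Emat rfl, Pi.single_apply]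
  simp only [eIndex_injective.eq_iff]

lemma eSp_dualBases : Module.DualBases eSp coord where
  eval_same i := by simp [coord_eSp]
  eval_of_ne i j hij := by simp [coord_eSp, hij]
  total h := Subtype.ext <| by simp only [coe_eq_Emat_coord, h]

lemma eq_coord_of_dual {ε : Fin 10 → Module.Dual ℝ sp2}
    (hdual : ∀ i j, ε i (eSp j) = if i = j then 1 else 0) : ε = coord :=
  funext fun i => eSp_dualBases.basis.ext fun j => by
    rw [eSp_dualBases.coe_basis, hdual, coord_eSp]

end Coordinates

section Isotropy

/-- The subspace `span(e₈, e₉, e₁₀)`, i.e. `sl(2,ℝ)_l`, of `sp(2,ℝ)`. -/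
def isotropy : Submodule ℝ sp2 := spanL.comap sp2.toSubmodule.subtype

lemma eSp_mem_isotropy {i : Fin 10} (hi : 7 ≤ i) : eSp i ∈ isotropy := by
  obtain rfl | rfl | rfl : i = 7 ∨ i = 8 ∨ i = 9 := by omega
  · exact Submodule.subset_span (.inl rfl)
  · exact Submodule.subset_span (.inr (.inl rfl))
  · exact Submodule.subset_span (.inr (.inr rfl))

lemma mem_isotropy_iff {z : sp2} :
    z ∈ isotropy ↔ ∃ p q r : ℝ, p • eSp 7 + q • eSp 8 + r • eSp 9 = z :=
  Submodule.mem_span_triple.trans <| exists₃_congr fun p q r =>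
    (Subtype.ext_iff (a1 := p • eSp 7 + q • eSp 8 + r • eSp 9)).symm

lemma coord_eq_zero_of_mem_isotropy {z : sp2} (hz : z ∈ isotropy) {i : Fin 10} (hi : i < 7) :
    coord i z = 0 := by
  obtain ⟨p, q, r, rfl⟩ := mem_isotropy_iff.mp hz
  simp [coord_eSp, show i ≠ 7 by omega, show i ≠ 8 by omega, show i ≠ 9 by omega]

lemma lie_Emat (p q r : ℝ) (a : Fin 10 → ℝ) :
    ⁅Emat ![p, 0, 0, 0, q, 0, 0, 0, 0, r], Emat a⁆ =
      Emat ![2 * p * a 4 - 2 * q * a 0, -q * a 1 - 2 * p * a 6, 0, -q * a 3 - 2 * p * a 8,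
        4 * p * a 9 - 4 * r * a 0, 0, q * a 6 + 2 * r * a 1, 0, q * a 8 + 2 * r * a 3,
        2 * q * a 9 - 2 * r * a 4] := by
  rw [Ring.lie_def]
  ext i j
  fin_cases i <;> fin_cases j <;>
    simp [Emat] <;> ring

lemma coord_lie {p q r : ℝ} {z : sp2} (hz : p • eSp 7 + q • eSp 8 + r • eSp 9 = z) (x : sp2)
    (i : Fin 10) :
    coord i ⁅z, x⁆ =
      ![-q * coord 0 x - 2 * p * coord 4 x, 0, -q * coord 2 x - 2 * p * coord 6 x, 0,
        q * coord 4 x + 2 * r * coord 0 x, 0, q * coord 6 x + 2 * r * coord 2 x,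
        2 * p * coord 8 x - 2 * q * coord 7 x, 4 * p * coord 9 x - 4 * r * coord 7 x,
        2 * q * coord 9 x - 2 * r * coord 8 x] i := by
  have hzE : (z : Matrix (Fin 4) (Fin 4) ℝ) = Emat ![p, 0, 0, 0, q, 0, 0, 0, 0, r] := by
    rw [coe_eq_Emat_coord, ← hz]
    simp [coord_eSp]
  have hlie := lie_Emat p q r ![coord 7 x, coord 0 x, coord 1 x, coord 2 x, coord 8 x,
      coord 3 x, coord 4 x, coord 5 x, coord 6 x, coord 9 x]
  rw [← hzE, ← coe_eq_Emat_coord, ← LieSubalgebra.coe_bracket] at hlie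
  rw [coord_of_coe_eq_Emat hlie]
  fin_cases i <;> simp [eIndex]

/-- The weights of the adjoint action of `e₉` on the basis `eSp`. -/
def weight : Fin 10 → ℤ := ![-1, 0, -1, 0, 1, 0, 1, -2, 0, 2]

lemma lie_eSp_eight (j : Fin 10) : ⁅eSp 8, eSp j⁆ = (weight j : ℝ) • eSp j := by
  refine eSp_dualBases.total fun i => ?_
  have hz : (0 : ℝ) • eSp 7 + (1 : ℝ) • eSp 8 + (0 : ℝ) • eSp 9 = eSp 8 := by simp
  rw [coord_lie hz, map_smul]
  simp only [coord_eSp]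
  fin_cases j <;> fin_cases i <;> simp [weight]

lemma lie_eSp_seven (j : Fin 10) :
    ⁅eSp 7, eSp j⁆ = (![0, 0, 0, 0, (-2 : ℝ) • eSp 0, 0, (-2 : ℝ) • eSp 2, 0, (2 : ℝ) • eSp 7,
      (4 : ℝ) • eSp 8] : Fin 10 → sp2) j := by
  refine eSp_dualBases.total fun i => ?_
  have hz : (1 : ℝ) • eSp 7 + (0 : ℝ) • eSp 8 + (0 : ℝ) • eSp 9 = eSp 7 := by simp
  rw [coord_lie hz]
  fin_cases j <;> fin_cases i <;> simp [coord_eSp]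

end Isotropy

section InvariantForms

/-- The form `e^{i+1} ∧ e^{j+1} ∧ e^{k+1}`. -/
def coframe (i j k : Fin 10) : sp2 [⋀^Fin 3]→ₗ[ℝ] ℝ := wedge ![coord i, coord j, coord k]

lemma coframe_apply (i j k : Fin 10) (X Y Z : sp2) :
    coframe i j k ![X, Y, Z] = trip (coord i) (coord j) (coord k) X Y Z := by
  rw [coframe, wedge_apply, Matrix.det_fin_three, trip]
  simp only [Fin.isValue, of_apply, cons_val_zero, cons_val_one, cons_val]
  ring

/-- The forms multiplied by `a, b, f, h, p, q, r, s, t, u` in the theorem, in this order. -/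
def invariantForm : Fin 10 → sp2 [⋀^Fin 3]→ₗ[ℝ] ℝ :=
  ![coframe 1 2 4 - coframe 0 1 6, coframe 1 3 5, coframe 0 1 4, coframe 1 2 6, coframe 0 3 4,
    coframe 0 3 6 + coframe 2 3 4, coframe 2 3 6, coframe 0 4 5,
    coframe 2 4 5 - coframe 0 5 6, coframe 2 5 6]

/-- For each `invariantForm`, the triple of basis vectors on which its coefficient is read off. -/
def leadingTriple : Fin 10 → Fin 3 → Fin 10 :=
  ![![1, 2, 4], ![1, 3, 5], ![0, 1, 4], ![1, 2, 6], ![0, 3, 4], ![0, 3, 6], ![2, 3, 6], ![0, 4, 5],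
    ![2, 4, 5], ![2, 5, 6]]

lemma eSp_comp_vec (i j k : Fin 10) : eSp ∘ ![i, j, k] = ![eSp i, eSp j, eSp k] :=
  (FinVec.map_eq eSp ![i, j, k]).symm

lemma invariantForm_leadingTriple (i j : Fin 10) :
    invariantForm i (eSp ∘ leadingTriple j) = if i = j then 1 else 0 := by
  fin_cases i <;> fin_cases j <;>
    simp [invariantForm, leadingTriple, eSp_comp_vec, coframe_apply, trip, coord_eSp]

lemma invariantForm_mem_basicForms (i : Fin 10) :
    invariantForm i ∈ basicForms isotropy ℝ (Fin 3) := by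
  refine mem_basicForms_three_iff.mpr ⟨fun x y z hx => ?_, fun z x y w hz => ?_⟩
  · have hzero {i : Fin 10} (hi : i < 7) := coord_eq_zero_of_mem_isotropy hx hi
    fin_cases i <;> simp [invariantForm, coframe_apply, trip, hzero]
  · obtain ⟨p, q, r, hz⟩ := mem_isotropy_iff.mp hz
    fin_cases i <;> simp [invariantForm, coframe_apply, trip, coord_lie hz] <;> ring

lemma eq_leadingTriple_or_partner :
    ∀ i j k : Fin 10, i < j → j < k → k < 7 → weight i + weight j + weight k = 0 →
      (∃ l, ![i, j, k] = leadingTriple l) ∨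
        ![i, j, k] = ![0, 1, 6] ∨ ![i, j, k] = ![2, 3, 4] ∨ ![i, j, k] = ![0, 5, 6] := by
  decide

variable {φ : sp2 [⋀^Fin 3]→ₗ[ℝ] ℝ}

lemma apply_eSp_eq_zero_of_weight_ne_zero (hφ : φ ∈ basicForms isotropy ℝ (Fin 3))
    {v : Fin 3 → Fin 10} (hv : weight (v 0) + weight (v 1) + weight (v 2) ≠ 0) :
    φ (eSp ∘ v) = 0 := by
  have hsum := sum_weights_smul_apply_eq_zero hφ (eSp_mem_isotropy (i := 8) (by decide))
    (v := eSp ∘ v) fun i => lie_eSp_eight (v i)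
  refine (smul_eq_zero.mp hsum).resolve_left ?_
  rw [Fin.sum_univ_three]
  exact_mod_cast hv

lemma apply_eSp_zero_six_add_apply_eSp_four_two (hφ : φ ∈ basicForms isotropy ℝ (Fin 3))
    {j : Fin 10} (hj : ⁅eSp 7, eSp j⁆ = 0) :
    φ ![eSp 0, eSp j, eSp 6] + φ ![eSp 4, eSp j, eSp 2] = 0 :=
  (smul_eq_zero.mp <| smul_apply_add_apply_eq_zero hφ (eSp_mem_isotropy le_rfl)
    (lie_eSp_seven 4) hj (lie_eSp_seven 6)).resolve_left (by norm_num)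

lemma apply_eSp_zero_one_six (hφ : φ ∈ basicForms isotropy ℝ (Fin 3)) :
    φ ![eSp 0, eSp 1, eSp 6] = -φ ![eSp 1, eSp 2, eSp 4] := by
  rw [← alternatingMap_rotate_three φ (eSp 4)]
  exact eq_neg_of_add_eq_zero_left (apply_eSp_zero_six_add_apply_eSp_four_two hφ (lie_eSp_seven 1))

lemma apply_eSp_two_three_four (hφ : φ ∈ basicForms isotropy ℝ (Fin 3)) :
    φ ![eSp 2, eSp 3, eSp 4] = φ ![eSp 0, eSp 3, eSp 6] := by
  rw [alternatingMap_reverse_three]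
  refine (eq_neg_of_add_eq_zero_left ?_).symm
  exact apply_eSp_zero_six_add_apply_eSp_four_two hφ (lie_eSp_seven 3)

lemma apply_eSp_zero_five_six (hφ : φ ∈ basicForms isotropy ℝ (Fin 3)) :
    φ ![eSp 0, eSp 5, eSp 6] = -φ ![eSp 2, eSp 4, eSp 5] := by
  rw [alternatingMap_rotate_three φ (eSp 2)]
  exact eq_neg_of_add_eq_zero_left (apply_eSp_zero_six_add_apply_eSp_four_two hφ (lie_eSp_seven 5))

lemma eq_zero_of_leadingTriple (hφ : φ ∈ basicForms isotropy ℝ (Fin 3))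
    (hlead : ∀ l, φ (eSp ∘ leadingTriple l) = 0) : φ = 0 := by
  refine alternatingMap_ext_of_strictMono eSp_dualBases.basis fun v hv => ?_
  rw [eSp_dualBases.coe_basis, AlternatingMap.zero_apply]
  by_cases hweight : weight (v 0) + weight (v 1) + weight (v 2) = 0
  swap
  · exact apply_eSp_eq_zero_of_weight_ne_zero hφ hweight
  obtain hv7 | hv7 := le_or_gt 7 (v 2)
  · exact hφ.1 _ 2 (eSp_mem_isotropy hv7)
  have hvec : ![v 0, v 1, v 2] = v := FinVec.etaExpand_eq v
  rw [← hvec]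
  obtain ⟨l, hl⟩ | hl | hl | hl := eq_leadingTriple_or_partner _ _ _
    (hv (show (0 : Fin 3) < 1 by decide)) (hv (show (1 : Fin 3) < 2 by decide)) hv7 hweight
  · rw [hl, hlead]
  · rw [hl, eSp_comp_vec, apply_eSp_zero_one_six hφ, ← eSp_comp_vec, neg_eq_zero]
    exact hlead 0
  · rw [hl, eSp_comp_vec, apply_eSp_two_three_four hφ, ← eSp_comp_vec]
    exact hlead 5
  · rw [hl, eSp_comp_vec, apply_eSp_zero_five_six hφ, ← eSp_comp_vec, neg_eq_zero]
    exact hlead 8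

/-- The coefficient of a basic form along `invariantForm i`. -/
def coefficient (i : Fin 10) : Module.Dual ℝ (basicForms isotropy ℝ (Fin 3)) where
  toFun φ := φ.1 (eSp ∘ leadingTriple i)
  map_add' _ _ := rfl
  map_smul' _ _ := rfl

lemma coefficient_apply (i : Fin 10) (φ : basicForms isotropy ℝ (Fin 3)) :
    coefficient i φ = φ.1 (eSp ∘ leadingTriple i) :=
  rfl

lemma invariantForm_dualBases :
    Module.DualBases (fun i => ⟨invariantForm i, invariantForm_mem_basicForms i⟩) coefficient where
  eval_same i := by simp [coefficient_apply, invariantForm_leadingTriple]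
  eval_of_ne i j hij := by simp [coefficient_apply, invariantForm_leadingTriple, hij.symm]
  total {φ ψ} h := sub_eq_zero.mp <| Subtype.ext <|
    eq_zero_of_leadingTriple (φ - ψ).2 fun l => sub_eq_zero.mpr (h l)

lemma finrank_basicForms_isotropy : Module.finrank ℝ (basicForms isotropy ℝ (Fin 3)) = 10 := by
  rw [Module.finrank_eq_card_basis invariantForm_dualBases.basis, Fintype.card_fin]

lemma mem_basicForms_isotropy_iff :
    φ ∈ basicForms isotropy ℝ (Fin 3) ↔ ∃ c : Fin 10 → ℝ, φ = ∑ i, c i • invariantForm i := by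
  constructor
  · intro hφ
    have hsum := invariantForm_dualBases.basis.sum_repr ⟨φ, hφ⟩
    exact ⟨invariantForm_dualBases.basis.repr ⟨φ, hφ⟩, by
      simpa using congrArg Subtype.val hsum.symm⟩
  · rintro ⟨c, rfl⟩
    exact Submodule.sum_smul_mem _ c fun i _ => invariantForm_mem_basicForms i

lemma sum_smul_invariantForm_apply (c : Fin 10 → ℝ) (X Y Z : sp2) :
    (∑ i, c i • invariantForm i) ![X, Y, Z] =
      c 2 * trip (coord 0) (coord 1) (coord 4) X Y Z +
      c 0 * (trip (coord 1) (coord 2) (coord 4) X Y Z - trip (coord 0) (coord 1) (coord 6) X Y Z) +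
      c 4 * trip (coord 0) (coord 3) (coord 4) X Y Z +
      c 5 * (trip (coord 0) (coord 3) (coord 6) X Y Z + trip (coord 2) (coord 3) (coord 4) X Y Z) +
      c 7 * trip (coord 0) (coord 4) (coord 5) X Y Z +
      c 8 * (trip (coord 2) (coord 4) (coord 5) X Y Z - trip (coord 0) (coord 5) (coord 6) X Y Z) +
      c 3 * trip (coord 1) (coord 2) (coord 6) X Y Z +
      c 1 * trip (coord 1) (coord 3) (coord 5) X Y Z +
      c 6 * trip (coord 2) (coord 3) (coord 6) X Y Z +
      c 9 * trip (coord 2) (coord 5) (coord 6) X Y Z := by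
  simp only [invariantForm, Fin.isValue, Fin.sum_univ_succ, cons_val_zero, cons_val_succ,
    Fin.succ_zero_eq_one, Fin.succ_one_eq_two, Fin.reduceSucc, smul_add, Finset.univ_unique,
    Fin.default_eq_zero, cons_val_fin_one, Finset.sum_singleton, AlternatingMap.add_apply,
    AlternatingMap.smul_apply, AlternatingMap.sub_apply, coframe_apply, smul_eq_mul]
  ring

end InvariantForms

theorem statement10 (ε : Fin 10 → (sp2 →ₗ[ℝ] ℝ))
    (hdual : ∀ i j : Fin 10, ε i (eSp j) = if i = j then 1 else 0) :
    -- the equivalence, for any alternating 3-form φ on 𝔤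
    (∀ φ : AlternatingMap ℝ sp2 ℝ (Fin 3),
      ((∀ x y z : sp2, (x : Matrix (Fin 4) (Fin 4) ℝ) ∈ spanL → φ ![x, y, z] = 0) ∧
       (∀ z x y w : sp2, (z : Matrix (Fin 4) (Fin 4) ℝ) ∈ spanL →
         φ ![⁅z, x⁆, y, w] + φ ![x, ⁅z, y⁆, w] + φ ![x, y, ⁅z, w⁆] = 0)) ↔
      (∃ a b f h p q r s t u : ℝ, ∀ X Y Z : sp2,
        φ ![X, Y, Z] =
          f * trip (ε 0) (ε 1) (ε 4) X Y Z +
          a * (trip (ε 1) (ε 2) (ε 4) X Y Z - trip (ε 0) (ε 1) (ε 6) X Y Z) +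
          p * trip (ε 0) (ε 3) (ε 4) X Y Z +
          q * (trip (ε 0) (ε 3) (ε 6) X Y Z + trip (ε 2) (ε 3) (ε 4) X Y Z) +
          s * trip (ε 0) (ε 4) (ε 5) X Y Z +
          t * (trip (ε 2) (ε 4) (ε 5) X Y Z - trip (ε 0) (ε 5) (ε 6) X Y Z) +
          h * trip (ε 1) (ε 2) (ε 6) X Y Z +
          b * trip (ε 1) (ε 3) (ε 5) X Y Z +
          r * trip (ε 2) (ε 3) (ε 6) X Y Z +
          u * trip (ε 2) (ε 5) (ε 6) X Y Z)) ∧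
    -- the space of such 3-forms is 10-dimensional
    (∃ W : Submodule ℝ (AlternatingMap ℝ sp2 ℝ (Fin 3)),
      (W : Set (AlternatingMap ℝ sp2 ℝ (Fin 3))) =
        {φ | (∀ x y z : sp2, (x : Matrix (Fin 4) (Fin 4) ℝ) ∈ spanL → φ ![x, y, z] = 0) ∧
          (∀ z x y w : sp2, (z : Matrix (Fin 4) (Fin 4) ℝ) ∈ spanL →
            φ ![⁅z, x⁆, y, w] + φ ![x, ⁅z, y⁆, w] + φ ![x, y, ⁅z, w⁆] = 0)} ∧
      Module.finrank ℝ W = 10) := by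
  obtain rfl := eq_coord_of_dual hdual
  refine ⟨fun φ => ?_, basicForms isotropy ℝ (Fin 3),
    Set.ext fun φ => mem_basicForms_three_iff, finrank_basicForms_isotropy⟩
  refine (mem_basicForms_three_iff (K := isotropy)).symm.trans
    (mem_basicForms_isotropy_iff.trans ⟨?_, ?_⟩)
  · rintro ⟨c, rfl⟩
    exact ⟨c 0, c 1, c 2, c 3, c 4, c 5, c 6, c 7, c 8, c 9, sum_smul_invariantForm_apply c⟩
  · rintro ⟨a, b, f, h, p, q, r, s, t, u, hφ⟩
    refine ⟨![a, b, f, h, p, q, r, s, t, u], alternatingMap_ext_three fun X Y Z => ?_⟩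
    rw [hφ, sum_smul_invariantForm_apply]
    rfl
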